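/- arXiv:2005.00729 — 10 statements merged into one kernel-verified Lean document; each statement's English description precedes it below -/
import Mathlib

section
/- Let T : V → g be a relative Rota-Baxter operator on a Leibniz algebra (g,[·,·]_g) with respect to a representation (V; ρL, ρR). Then the bilinear operation [u,v]_T := ρL(Tu)v + ρR(Tv)u defines a Leibniz algebra structure on V; that is, for all u,v,w ∈ V one has [u,[v,w]_T]_T = [[u,v]_T,w]_T + [v,[u,w]_T]_T. -/
/-- If `T` is a relative Rota-Baxter operator on a Leibniz algebra `g` with
respect to a representation `(V; ρL, ρR)`, then `[u,v]_T := ρL(Tu)v + ρR(Tv)u` defines a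
Leibniz algebra structure on `V`. -/
theorem leibniz_bracket_of_relative_rota_baxter
    {K : Type*} [Field K] [CharZero K]
    {g V : Type*} [AddCommGroup g] [Module K g] [AddCommGroup V] [Module K V]
    (br : g →ₗ[K] g →ₗ[K] g)
    (leib : ∀ x y z : g, br x (br y z) = br (br x y) z + br y (br x z))
    (ρL ρR : g →ₗ[K] Module.End K V)
    (hL : ∀ x y : g, ρL (br x y) = ρL x * ρL y - ρL y * ρL x)
    (hR : ∀ x y : g, ρR (br x y) = ρL x * ρR y - ρR y * ρL x)
    (hRL : ∀ x y : g, ρR y * ρL x = -(ρR y * ρR x))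
    (T : V →ₗ[K] g)
    (hT : ∀ u v : V, br (T u) (T v) = T (ρL (T u) v + ρR (T v) u))
    (bT : V → V → V)
    (hbT : ∀ u v : V, bT u v = ρL (T u) v + ρR (T v) u) :
    ∀ u v w : V, bT u (bT v w) = bT (bT u v) w + bT v (bT u w) := by
  intro u v w
  have h := LinearMap.congr_fun (hRL (T v) (T w)) u
  simp only [Module.End.mul_apply, LinearMap.neg_apply] at h
  rw [hbT u (bT v w), hbT (bT u v) w, hbT v (bT u w), hbT v w, hbT u v, hbT u w,
    ← hT, ← hT, ← hT, hL, hR, hR]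
  simp only [LinearMap.sub_apply, Module.End.mul_apply, map_add, h]
  abel
end

section
/- Let T : V → g be a relative Rota-Baxter operator on a Leibniz algebra (g,[·,·]_g) with respect to a representation (V; ρL, ρR). Define ρ̄L, ρ̄R : V → End_K(g) by ρ̄L(u)x = [Tu,x]_g − T(ρR(x)u) and ρ̄R(u)x = [x,Tu]_g − T(ρL(x)u). Then (g; ρ̄L, ρ̄R) is a representation of the Leibniz algebra (V,[·,·]_T); that is, for all u,v ∈ V: ρ̄L([u,v]_T) = ρ̄L(u)∘ρ̄L(v) − ρ̄L(v)∘ρ̄L(u), ρ̄R([u,v]_T) = ρ̄L(u)∘ρ̄R(v) − ρ̄R(v)∘ρ̄L(u), and ρ̄R(u)∘ρ̄L(v) = −ρ̄R(u)∘ρ̄R(v). -/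
/-- For a relative Rota-Baxter operator `T`, the maps
`ρ̄L(u)x = [Tu,x]_g − T(ρR(x)u)` and `ρ̄R(u)x = [x,Tu]_g − T(ρL(x)u)` make `g` a
representation of the Leibniz algebra `(V,[·,·]_T)`. -/
theorem induced_representation_of_relative_rota_baxter
    {K : Type*} [Field K] [CharZero K]
    {g V : Type*} [AddCommGroup g] [Module K g] [AddCommGroup V] [Module K V]
    (br : g →ₗ[K] g →ₗ[K] g)
    (leib : ∀ x y z : g, br x (br y z) = br (br x y) z + br y (br x z))
    (ρL ρR : g →ₗ[K] Module.End K V)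
    (hL : ∀ x y : g, ρL (br x y) = ρL x * ρL y - ρL y * ρL x)
    (hR : ∀ x y : g, ρR (br x y) = ρL x * ρR y - ρR y * ρL x)
    (hRL : ∀ x y : g, ρR y * ρL x = -(ρR y * ρR x))
    (T : V →ₗ[K] g)
    (hT : ∀ u v : V, br (T u) (T v) = T (ρL (T u) v + ρR (T v) u))
    (bT : V → V → V)
    (hbT : ∀ u v : V, bT u v = ρL (T u) v + ρR (T v) u)
    (bL bR : V → g → g)
    (hbL : ∀ (u : V) (x : g), bL u x = br (T u) x - T (ρR x u))
    (hbR : ∀ (u : V) (x : g), bR u x = br x (T u) - T (ρL x u)) :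
    (∀ (u v : V) (x : g), bL (bT u v) x = bL u (bL v x) - bL v (bL u x)) ∧
    (∀ (u v : V) (x : g), bR (bT u v) x = bL u (bR v x) - bR v (bL u x)) ∧
    (∀ (u v : V) (x : g), bR u (bL v x) = -(bR u (bR v x))) := by
  have hL' : ∀ x y w, ρL (br x y) w = ρL x (ρL y w) - ρL y (ρL x w) := by
    intro x y w; rw [hL]; rfl
  have hR' : ∀ x y w, ρR (br x y) w = ρL x (ρR y w) - ρR y (ρL x w) := by
    intro x y w; rw [hR]; rfl
  have hRL' : ∀ x y w, ρR y (ρR x w) = -(ρR y (ρL x w)) := by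
    intro x y w
    have h := congrArg (fun f : Module.End K V => f w) (hRL x y)
    have h2 : ρR y (ρL x w) = -(ρR y (ρR x w)) := h
    rw [h2, neg_neg]
  have hTb : ∀ u v, T (bT u v) = br (T u) (T v) := by
    intro u v; rw [hT, hbT]
  refine ⟨?_, ?_, ?_⟩
  · intro u v x
    simp only [hbL, hTb]
    rw [hbT]
    simp only [map_sub, map_add, map_neg, LinearMap.sub_apply, LinearMap.add_apply, hR', hRL', hT u (ρR x v), hT v (ρR x u)]
    rw [leib (T u) (T v) x]
    abel
  · intro u v x
    simp only [hbL, hbR, hTb]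
    rw [hbT]
    simp only [map_sub, map_add, map_neg, LinearMap.sub_apply, LinearMap.add_apply,
      hL', hR', hRL', hT u (ρL x v), hT (ρR x u) v]
    rw [leib (T u) x (T v)]
    abel
  · intro u v x
    have h1 : br (br (T v) x) (T u) + br (br x (T v)) (T u) = 0 := by
      have a := leib (T v) x (T u)
      have b := leib x (T v) (T u)
      rw [b] at a
      have c : br (br (T v) x) (T u) + br (br x (T v)) (T u) + br (T v) (br x (T u))
          = 0 + br (T v) (br x (T u)) := by
        rw [zero_add]; nth_rewrite 2 [a]; abel
      exact add_right_cancel c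
    have h1' := eq_neg_of_add_eq_zero_left h1
    simp only [hbL, hbR]
    simp only [map_sub, map_add, map_neg, LinearMap.sub_apply, LinearMap.add_apply,
      hL', hRL', hT (ρL x v) u, hT (ρR x v) u, h1']
    abel
end

section
/- Let T : V → g be a relative Rota-Baxter operator on a Leibniz algebra (g,[·,·]_g) with respect to a representation (V; ρL, ρR), and let 𝔗 : V → g be a linear map. Then T_t = T + t𝔗 is a relative Rota-Baxter operator for every t ∈ K if and only if for all u,v ∈ V both of the following hold: (14) [Tu,𝔗v]_g + [𝔗u,Tv]_g = T(ρL(𝔗u)v + ρR(𝔗v)u) + 𝔗(ρL(Tu)v + ρR(Tv)u), and (15) [𝔗u,𝔗v]_g = 𝔗(ρL(𝔗u)v + ρR(𝔗v)u). -/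
/-- `T + t𝔗` is a relative Rota-Baxter operator for every `t ∈ K` if and only
if equations (14) and (15) hold. -/
theorem linear_deformation_iff
    {K : Type*} [Field K] [CharZero K]
    {g V : Type*} [AddCommGroup g] [Module K g] [AddCommGroup V] [Module K V]
    (br : g →ₗ[K] g →ₗ[K] g)
    (leib : ∀ x y z : g, br x (br y z) = br (br x y) z + br y (br x z))
    (ρL ρR : g →ₗ[K] Module.End K V)
    (hL : ∀ x y : g, ρL (br x y) = ρL x * ρL y - ρL y * ρL x)
    (hR : ∀ x y : g, ρR (br x y) = ρL x * ρR y - ρR y * ρL x)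
    (hRL : ∀ x y : g, ρR y * ρL x = -(ρR y * ρR x))
    (T : V →ₗ[K] g)
    (hT : ∀ u v : V, br (T u) (T v) = T (ρL (T u) v + ρR (T v) u))
    (𝔗 : V →ₗ[K] g) :
    (∀ t : K, ∀ u v : V,
        br ((T + t • 𝔗) u) ((T + t • 𝔗) v) =
          (T + t • 𝔗) (ρL ((T + t • 𝔗) u) v + ρR ((T + t • 𝔗) v) u)) ↔
    ((∀ u v : V,
        br (T u) (𝔗 v) + br (𝔗 u) (T v) =
          T (ρL (𝔗 u) v + ρR (𝔗 v) u) + 𝔗 (ρL (T u) v + ρR (T v) u)) ∧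
      (∀ u v : V, br (𝔗 u) (𝔗 v) = 𝔗 (ρL (𝔗 u) v + ρR (𝔗 v) u))) := by
  have key : ∀ (t : K) (u v : V),
      br ((T + t • 𝔗) u) ((T + t • 𝔗) v) -
          (T + t • 𝔗) (ρL ((T + t • 𝔗) u) v + ρR ((T + t • 𝔗) v) u) =
        t • ((br (T u) (𝔗 v) + br (𝔗 u) (T v)) -
          (T (ρL (𝔗 u) v + ρR (𝔗 v) u) + 𝔗 (ρL (T u) v + ρR (T v) u))) +
        (t * t) • (br (𝔗 u) (𝔗 v) - 𝔗 (ρL (𝔗 u) v + ρR (𝔗 v) u)) := by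
    intro t u v
    have h := hT u v
    simp only [LinearMap.add_apply, LinearMap.smul_apply, map_add, map_smul] at h ⊢
    rw [h]
    module
  constructor
  · intro H
    have main : ∀ u v : V,
        (br (T u) (𝔗 v) + br (𝔗 u) (T v)) -
          (T (ρL (𝔗 u) v + ρR (𝔗 v) u) + 𝔗 (ρL (T u) v + ρR (T v) u)) = 0 ∧
        br (𝔗 u) (𝔗 v) - 𝔗 (ρL (𝔗 u) v + ρR (𝔗 v) u) = 0 := by
      intro u v
      have h1 := key 1 u v
      have h2 := key (-1) u v
      rw [sub_eq_zero.mpr (H _ u v)] at h1 h2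
      generalize (br (T u) (𝔗 v) + br (𝔗 u) (T v)) -
          (T (ρL (𝔗 u) v + ρR (𝔗 v) u) + 𝔗 (ρL (T u) v + ρR (T v) u)) = A at h1 h2 ⊢
      generalize br (𝔗 u) (𝔗 v) - 𝔗 (ρL (𝔗 u) v + ρR (𝔗 v) u) = B at h1 h2 ⊢
      constructor
      · have h3 : (2 : K) • A = 0 := by
          linear_combination (norm := module) h2 - h1
        exact (smul_eq_zero.mp h3).resolve_left two_ne_zero
      · have h3 : (2 : K) • B = 0 := by
          linear_combination (norm := module) -h2 - h1
        exact (smul_eq_zero.mp h3).resolve_left two_ne_zero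
    exact ⟨fun u v => sub_eq_zero.mp (main u v).1, fun u v => sub_eq_zero.mp (main u v).2⟩
  · rintro ⟨h14, h15⟩ t u v
    rw [← sub_eq_zero, key, sub_eq_zero.mpr (h14 u v), sub_eq_zero.mpr (h15 u v)]
    simp
end

section
/- Let T : V → g be a relative Rota-Baxter operator on a Leibniz algebra (g,[·,·]_g) with respect to a representation (V; ρL, ρR), and let 𝔗 : V → g be a linear map generating a linear deformation of T, i.e. T + t𝔗 is a relative Rota-Baxter operator for every t ∈ K. Define ω_𝔗(u,v) := ρL(𝔗u)v + ρR(𝔗v)u. Then ω_𝔗 generates a linear deformation of the Leibniz algebra (V,[·,·]_T); that is, for every t ∈ K the bilinear operation [u,v]_t := [u,v]_T + t·ω_𝔗(u,v) satisfies the left Leibniz identity [u,[v,w]_t]_t = [[u,v]_t,w]_t + [v,[u,w]_t]_t for all u,v,w ∈ V. -/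
/-- If `𝔗` generates a linear deformation of a relative Rota-Baxter operator
`T`, then `ω_𝔗(u,v) = ρL(𝔗u)v + ρR(𝔗v)u` generates a linear deformation of the Leibniz
algebra `(V,[·,·]_T)`. -/
theorem linear_deformation_of_induced_leibniz
    {K : Type*} [Field K] [CharZero K]
    {g V : Type*} [AddCommGroup g] [Module K g] [AddCommGroup V] [Module K V]
    (br : g →ₗ[K] g →ₗ[K] g)
    (leib : ∀ x y z : g, br x (br y z) = br (br x y) z + br y (br x z))
    (ρL ρR : g →ₗ[K] Module.End K V)
    (hL : ∀ x y : g, ρL (br x y) = ρL x * ρL y - ρL y * ρL x)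
    (hR : ∀ x y : g, ρR (br x y) = ρL x * ρR y - ρR y * ρL x)
    (hRL : ∀ x y : g, ρR y * ρL x = -(ρR y * ρR x))
    (T : V →ₗ[K] g)
    (hT : ∀ u v : V, br (T u) (T v) = T (ρL (T u) v + ρR (T v) u))
    (𝔗 : V →ₗ[K] g)
    (hdef : ∀ t : K, ∀ u v : V,
        br ((T + t • 𝔗) u) ((T + t • 𝔗) v) =
          (T + t • 𝔗) (ρL ((T + t • 𝔗) u) v + ρR ((T + t • 𝔗) v) u))
    (bT : V → V → V)
    (hbT : ∀ u v : V, bT u v = ρL (T u) v + ρR (T v) u)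
    (ω : V → V → V)
    (hω : ∀ u v : V, ω u v = ρL (𝔗 u) v + ρR (𝔗 v) u)
    (bt : K → V → V → V)
    (hbt : ∀ (t : K) (u v : V), bt t u v = bT u v + t • ω u v) :
    ∀ (t : K) (u v w : V),
      bt t u (bt t v w) = bt t (bt t u v) w + bt t v (bt t u w) := by
  intro t u v w
  have key : ∀ a b : V, bt t a b = ρL ((T + t • 𝔗) a) b + ρR ((T + t • 𝔗) b) a := by
    intro a b
    rw [hbt, hbT, hω]
    simp only [LinearMap.add_apply, LinearMap.smul_apply, map_add, map_smul, smul_add]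
    abel
  have hS := hdef t
  generalize T + t • 𝔗 = S at key hS
  have hS' : ∀ a b : V, S (bt t a b) = br (S a) (S b) := by
    intro a b
    rw [key, hS]
  have h3 : ρR (S w) (ρL (S v) u) = -ρR (S w) (ρR (S v) u) := by
    have := congrArg (fun f : Module.End K V => f u) (hRL (S v) (S w))
    simpa using this
  rw [key u, key (bt t u v), key v (bt t u w), hS', hS', hS', key v w, key u v, key u w, hL, hR, hR]
  simp only [LinearMap.sub_apply, Module.End.mul_apply, map_add, h3]
  abel
end

section
/- Let T be a relative Rota-Baxter operator on a Leibniz algebra (g,[·,·]_g) with respect to a representation (V; ρL, ρR), let 𝔗₁, 𝔗₂ : V → g be linear maps such that T + t𝔗₁ and T + t𝔗₂ are relative Rota-Baxter operators for every t ∈ K, and let x ∈ g be such that for every t ∈ K the pair (Id_g + tL_x, Id_V + tρL(x)) is a homomorphism from T + t𝔗₂ to T + t𝔗₁. Then: (a) [[x,y]_g,[x,z]_g]_g = 0 for all y,z ∈ g; (b) 𝔗₁(ρL(x)u) = [x, 𝔗₂(u)]_g for all u ∈ V; (c) ρL([x,y]_g)∘ρL(x) = 0 for all y ∈ g; (d)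 ρR([x,y]_g)∘ρL(x) = 0 for all y ∈ g. -/
/-- If `(Id + tL_x, Id + tρL(x))` is a homomorphism from `T + t𝔗₂` to
`T + t𝔗₁` for every `t`, then the four displayed conditions (16)-(20) hold. -/
theorem conditions_from_equivalence_of_linear_deformations
    {K : Type*} [Field K] [CharZero K]
    {g V : Type*} [AddCommGroup g] [Module K g] [AddCommGroup V] [Module K V]
    (br : g →ₗ[K] g →ₗ[K] g)
    (leib : ∀ x y z : g, br x (br y z) = br (br x y) z + br y (br x z))
    (ρL ρR : g →ₗ[K] Module.End K V)
    (hL : ∀ x y : g, ρL (br x y) = ρL x * ρL y - ρL y * ρL x)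
    (hR : ∀ x y : g, ρR (br x y) = ρL x * ρR y - ρR y * ρL x)
    (hRL : ∀ x y : g, ρR y * ρL x = -(ρR y * ρR x))
    (T : V →ₗ[K] g)
    (hT : ∀ u v : V, br (T u) (T v) = T (ρL (T u) v + ρR (T v) u))
    (𝔗₁ 𝔗₂ : V →ₗ[K] g)
    (hdef₁ : ∀ t : K, ∀ u v : V,
        br ((T + t • 𝔗₁) u) ((T + t • 𝔗₁) v) =
          (T + t • 𝔗₁) (ρL ((T + t • 𝔗₁) u) v + ρR ((T + t • 𝔗₁) v) u))
    (hdef₂ : ∀ t : K, ∀ u v : V,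
        br ((T + t • 𝔗₂) u) ((T + t • 𝔗₂) v) =
          (T + t • 𝔗₂) (ρL ((T + t • 𝔗₂) u) v + ρR ((T + t • 𝔗₂) v) u))
    (x : g)
    (hhom_alg : ∀ t : K, ∀ y z : g,
        ((LinearMap.id + t • br x : g →ₗ[K] g)) (br y z) =
          br (((LinearMap.id + t • br x : g →ₗ[K] g)) y) (((LinearMap.id + t • br x : g →ₗ[K] g)) z))
    (hhom_comm : ∀ t : K, ∀ u : V,
        (T + t • 𝔗₁) (((LinearMap.id + t • ρL x : V →ₗ[K] V)) u) =
          ((LinearMap.id + t • br x : g →ₗ[K] g)) ((T + t • 𝔗₂) u))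
    (hhom_L : ∀ t : K, ∀ (y : g) (u : V),
        ((LinearMap.id + t • ρL x : V →ₗ[K] V)) (ρL y u) =
          ρL (((LinearMap.id + t • br x : g →ₗ[K] g)) y) (((LinearMap.id + t • ρL x : V →ₗ[K] V)) u))
    (hhom_R : ∀ t : K, ∀ (y : g) (u : V),
        ((LinearMap.id + t • ρL x : V →ₗ[K] V)) (ρR y u) =
          ρR (((LinearMap.id + t • br x : g →ₗ[K] g)) y) (((LinearMap.id + t • ρL x : V →ₗ[K] V)) u)) :
    (∀ y z : g, br (br x y) (br x z) = 0) ∧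
    (∀ u : V, 𝔗₁ (ρL x u) = br x (𝔗₂ u)) ∧
    (∀ y : g, ρL (br x y) * ρL x = 0) ∧
    (∀ y : g, ρR (br x y) * ρL x = 0) := by
  refine ⟨fun y z => ?_, fun u => ?_, fun y => LinearMap.ext fun u => ?_,
    fun y => LinearMap.ext fun u => ?_⟩
  · have h1 := hhom_alg 1 y z
    have h2 := hhom_alg (-1) y z
    simp only [LinearMap.add_apply, LinearMap.id_apply, map_add, 
      one_smul, neg_smul, map_neg, LinearMap.neg_apply] at h1 h2
    linear_combination (norm := module) (-1/2 : K) • h1 + (-1/2 : K) • h2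
  · have h1 := hhom_comm 1 u
    have h2 := hhom_comm (-1) u
    simp only [LinearMap.add_apply, LinearMap.id_apply, map_add, 
      one_smul, neg_smul, map_neg, LinearMap.neg_apply] at h1 h2
    linear_combination (norm := module) (1/2 : K) • h1 + (1/2 : K) • h2
  · have h1 := hhom_L 1 y u
    have h2 := hhom_L (-1) y u
    simp only [LinearMap.add_apply, LinearMap.id_apply, map_add, 
      one_smul, neg_smul, map_neg, LinearMap.neg_apply] at h1 h2
    rw [Module.End.mul_apply, LinearMap.zero_apply]
    linear_combination (norm := module) (-1/2 : K) • h1 + (-1/2 : K) • h2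
  · have h1 := hhom_R 1 y u
    have h2 := hhom_R (-1) y u
    simp only [LinearMap.add_apply, LinearMap.id_apply, map_add, 
      one_smul, neg_smul, map_neg, LinearMap.neg_apply] at h1 h2
    rw [Module.End.mul_apply, LinearMap.zero_apply]
    linear_combination (norm := module) (-1/2 : K) • h1 + (-1/2 : K) • h2
end

section
/- Let T be a relative Rota-Baxter operator on a Leibniz algebra (g,[·,·]_g) with respect to a representation (V; ρL, ρR), and let 𝔗₁, 𝔗₂ : V → g be linear maps such that T + t𝔗₁ and T + t𝔗₂ are relative Rota-Baxter operators for every t ∈ K. If these two linear deformations are equivalent, i.e. there exists x ∈ g such that for every t ∈ K the pair (Id_g + tL_x, Id_V + tρL(x)) is a homomorphism from T + t𝔗₂ to T + t𝔗₁, then 𝔗₂ − 𝔗₁ = ∂_T x; that is, (𝔗₂ − 𝔗₁)(u) = T(ρL(x)u) − [x,Tu]_g for all u ∈ V, so 𝔗₁ and 𝔗₂ define the same first cohomology class of T. -/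
/-- If two linear deformations `T + t𝔗₁` and `T + t𝔗₂` are equivalent via
`(Id + tL_x, Id + tρL(x))`, then `𝔗₂ − 𝔗₁ = ∂_T x`, so `𝔗₁` and `𝔗₂` define the same
first cohomology class. -/
theorem equivalent_linear_deformations_cohomologous
    {K : Type*} [Field K] [CharZero K]
    {g V : Type*} [AddCommGroup g] [Module K g] [AddCommGroup V] [Module K V]
    (br : g →ₗ[K] g →ₗ[K] g)
    (leib : ∀ x y z : g, br x (br y z) = br (br x y) z + br y (br x z))
    (ρL ρR : g →ₗ[K] Module.End K V)
    (hL : ∀ x y : g, ρL (br x y) = ρL x * ρL y - ρL y * ρL x)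
    (hR : ∀ x y : g, ρR (br x y) = ρL x * ρR y - ρR y * ρL x)
    (hRL : ∀ x y : g, ρR y * ρL x = -(ρR y * ρR x))
    (T : V →ₗ[K] g)
    (hT : ∀ u v : V, br (T u) (T v) = T (ρL (T u) v + ρR (T v) u))
    (𝔗₁ 𝔗₂ : V →ₗ[K] g)
    (hdef₁ : ∀ t : K, ∀ u v : V,
        br ((T + t • 𝔗₁) u) ((T + t • 𝔗₁) v) =
          (T + t • 𝔗₁) (ρL ((T + t • 𝔗₁) u) v + ρR ((T + t • 𝔗₁) v) u))
    (hdef₂ : ∀ t : K, ∀ u v : V,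
        br ((T + t • 𝔗₂) u) ((T + t • 𝔗₂) v) =
          (T + t • 𝔗₂) (ρL ((T + t • 𝔗₂) u) v + ρR ((T + t • 𝔗₂) v) u))
    (x : g)
    (hhom_alg : ∀ t : K, ∀ y z : g,
        ((LinearMap.id + t • br x : g →ₗ[K] g)) (br y z) =
          br (((LinearMap.id + t • br x : g →ₗ[K] g)) y) (((LinearMap.id + t • br x : g →ₗ[K] g)) z))
    (hhom_comm : ∀ t : K, ∀ u : V,
        (T + t • 𝔗₁) (((LinearMap.id + t • ρL x : V →ₗ[K] V)) u) =
          ((LinearMap.id + t • br x : g →ₗ[K] g)) ((T + t • 𝔗₂) u))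
    (hhom_L : ∀ t : K, ∀ (y : g) (u : V),
        ((LinearMap.id + t • ρL x : V →ₗ[K] V)) (ρL y u) =
          ρL (((LinearMap.id + t • br x : g →ₗ[K] g)) y) (((LinearMap.id + t • ρL x : V →ₗ[K] V)) u))
    (hhom_R : ∀ t : K, ∀ (y : g) (u : V),
        ((LinearMap.id + t • ρL x : V →ₗ[K] V)) (ρR y u) =
          ρR (((LinearMap.id + t • br x : g →ₗ[K] g)) y) (((LinearMap.id + t • ρL x : V →ₗ[K] V)) u)) :
    ∀ u : V, 𝔗₂ u - 𝔗₁ u = T (ρL x u) - br x (T u) := by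
  intro u
  have h1 := hhom_comm 1 u
  have h2 := hhom_comm (-1) u
  simp only [LinearMap.add_apply, LinearMap.smul_apply, LinearMap.id_apply, map_add, map_smul,
    one_smul, neg_smul, LinearMap.neg_apply, map_neg, neg_neg] at h1 h2
  have h3 : (2 : K) • (𝔗₂ u - 𝔗₁ u - (T (ρL x u) - br x (T u))) = 0 := by
    rw [two_smul]
    linear_combination (norm := module) h2 - h1
  exact sub_eq_zero.mp ((smul_eq_zero.mp h3).resolve_left two_ne_zero)
end

section
/- Let T be a relative Rota-Baxter operator on a Leibniz algebra (g,[·,·]_g) with respect to a representation (V; ρL, ρR), and let x ∈ g be a Nijenhuis element associated to T. Define 𝔗 := ∂_T x, i.e. 𝔗(u) = T(ρL(x)u) − [x,Tu]_g. Then T_t = T + t𝔗 is a relative Rota-Baxter operator for every t ∈ K, and this linear deformation is trivial: for every t ∈ K the pair (Id_g + tL_x, Id_V + tρL(x)) is a homomorphism from T_t to T. -/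
/-- For a Nijenhuis element `x` associated to a relative Rota-Baxter operator
`T`, the map `𝔗 = ∂_T x` generates a trivial linear deformation of `T`: `T + t𝔗` is a
relative Rota-Baxter operator for all `t`, and `(Id + tL_x, Id + tρL(x))` is a
homomorphism from `T + t𝔗` to `T`. -/
theorem nijenhuis_element_gives_trivial_linear_deformation
    {K : Type*} [Field K] [CharZero K]
    {g V : Type*} [AddCommGroup g] [Module K g] [AddCommGroup V] [Module K V]
    (br : g →ₗ[K] g →ₗ[K] g)
    (leib : ∀ x y z : g, br x (br y z) = br (br x y) z + br y (br x z))
    (ρL ρR : g →ₗ[K] Module.End K V)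
    (hL : ∀ x y : g, ρL (br x y) = ρL x * ρL y - ρL y * ρL x)
    (hR : ∀ x y : g, ρR (br x y) = ρL x * ρR y - ρR y * ρL x)
    (hRL : ∀ x y : g, ρR y * ρL x = -(ρR y * ρR x))
    (T : V →ₗ[K] g)
    (hT : ∀ u v : V, br (T u) (T v) = T (ρL (T u) v + ρR (T v) u))
    (x : g)
    (hNij1 : ∀ y z : g, br (br x y) (br x z) = 0)
    (hNij2 : ∀ y : g, ρL (br x y) * ρL x = 0)
    (hNij3 : ∀ y : g, ρR (br x y) * ρL x = 0)
    (hNij4 : ∀ u : V, br x (T (ρL x u) - br x (T u)) = 0)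
    (𝔗 : V →ₗ[K] g)
    (h𝔗 : ∀ u : V, 𝔗 u = T (ρL x u) - br x (T u)) :
    (∀ t : K, ∀ u v : V,
        br ((T + t • 𝔗) u) ((T + t • 𝔗) v) =
          (T + t • 𝔗) (ρL ((T + t • 𝔗) u) v + ρR ((T + t • 𝔗) v) u)) ∧
    (∀ t : K, ∀ y z : g,
        ((LinearMap.id + t • br x : g →ₗ[K] g)) (br y z) =
          br (((LinearMap.id + t • br x : g →ₗ[K] g)) y)
            (((LinearMap.id + t • br x : g →ₗ[K] g)) z)) ∧
    (∀ t : K, ∀ u : V,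
        T (((LinearMap.id + t • ρL x : V →ₗ[K] V)) u) =
          ((LinearMap.id + t • br x : g →ₗ[K] g)) ((T + t • 𝔗) u)) ∧
    (∀ t : K, ∀ (y : g) (u : V),
        ((LinearMap.id + t • ρL x : V →ₗ[K] V)) (ρL y u) =
          ρL (((LinearMap.id + t • br x : g →ₗ[K] g)) y)
            (((LinearMap.id + t • ρL x : V →ₗ[K] V)) u)) ∧
    (∀ t : K, ∀ (y : g) (u : V),
        ((LinearMap.id + t • ρL x : V →ₗ[K] V)) (ρR y u) =
          ρR (((LinearMap.id + t • br x : g →ₗ[K] g)) y)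
            (((LinearMap.id + t • ρL x : V →ₗ[K] V)) u)) := by
  have hL' : ∀ (y z : g) (u : V), ρL (br y z) u = ρL y (ρL z u) - ρL z (ρL y u) := by
    intro y z u
    rw [hL]; rfl
  have hR' : ∀ (y z : g) (u : V), ρR (br y z) u = ρL y (ρR z u) - ρR z (ρL y u) := by
    intro y z u
    rw [hR]; rfl
  have n2 : ∀ (y : g) (u : V), ρL (br x y) (ρL x u) = 0 := fun y u =>
    LinearMap.congr_fun (hNij2 y) u
  have n3 : ∀ (y : g) (u : V), ρR (br x y) (ρL x u) = 0 := fun y u =>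
    LinearMap.congr_fun (hNij3 y) u
  have n4 : ∀ u : V, br x (𝔗 u) = 0 := fun u => by rw [h𝔗]; exact hNij4 u
  have p2 : ∀ t : K, ∀ y z : g,
        ((LinearMap.id + t • br x : g →ₗ[K] g)) (br y z) =
          br (((LinearMap.id + t • br x : g →ₗ[K] g)) y)
            (((LinearMap.id + t • br x : g →ₗ[K] g)) z) := by
    intro t y z
    simp only [LinearMap.add_apply, LinearMap.smul_apply, LinearMap.id_apply, map_add, map_smul,
      hNij1, leib x y z]
    module
  have p3 : ∀ t : K, ∀ u : V,
        T (((LinearMap.id + t • ρL x : V →ₗ[K] V)) u) =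
          ((LinearMap.id + t • br x : g →ₗ[K] g)) ((T + t • 𝔗) u) := by
    intro t u
    simp only [LinearMap.add_apply, LinearMap.smul_apply, LinearMap.id_apply, map_add, map_smul,
      n4]
    rw [h𝔗]
    module
  have p4 : ∀ t : K, ∀ (y : g) (u : V),
        ((LinearMap.id + t • ρL x : V →ₗ[K] V)) (ρL y u) =
          ρL (((LinearMap.id + t • br x : g →ₗ[K] g)) y)
            (((LinearMap.id + t • ρL x : V →ₗ[K] V)) u) := by
    intro t y u
    simp only [LinearMap.add_apply, LinearMap.smul_apply, LinearMap.id_apply, map_add, map_smul,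
      n2]
    rw [hL']
    module
  have p5 : ∀ t : K, ∀ (y : g) (u : V),
        ((LinearMap.id + t • ρL x : V →ₗ[K] V)) (ρR y u) =
          ρR (((LinearMap.id + t • br x : g →ₗ[K] g)) y)
            (((LinearMap.id + t • ρL x : V →ₗ[K] V)) u) := by
    intro t y u
    simp only [LinearMap.add_apply, LinearMap.smul_apply, LinearMap.id_apply, map_add, map_smul,
      n3]
    rw [hR']
    module
  refine ⟨?_, p2, p3, p4, p5⟩
  intro t u v
  -- the first-order part of the defect vanishes
  have d1 : br (T u) (𝔗 v) + br (𝔗 u) (T v) =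
      T (ρL (𝔗 u) v + ρR (𝔗 v) u) + 𝔗 (ρL (T u) v + ρR (T v) u) := by
    rw [h𝔗 (ρL (T u) v + ρR (T v) u), ← hT u v, leib x, h𝔗 u, h𝔗 v]
    simp only [map_sub, map_add, LinearMap.sub_apply, hT, hL', hR']
    abel
  -- the defect is killed by `Id + s L_x`
  have key : ∀ s : K, ((LinearMap.id + s • br x : g →ₗ[K] g))
      (br ((T + s • 𝔗) u) ((T + s • 𝔗) v)) =
      ((LinearMap.id + s • br x : g →ₗ[K] g))
        ((T + s • 𝔗) (ρL ((T + s • 𝔗) u) v + ρR ((T + s • 𝔗) v) u)) := by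
    intro s
    rw [p2, ← p3, ← p3, ← p3, hT, map_add (LinearMap.id + s • ρL x : V →ₗ[K] V), p4, p5,
      ← p3, ← p3]
  have expand : ∀ s : K, br ((T + s • 𝔗) u) ((T + s • 𝔗) v) -
      (T + s • 𝔗) (ρL ((T + s • 𝔗) u) v + ρR ((T + s • 𝔗) v) u) =
      (s * s) • (br (𝔗 u) (𝔗 v) - 𝔗 (ρL (𝔗 u) v + ρR (𝔗 v) u)) := by
    intro s
    have d0 := hT u v
    simp only [map_add] at d0 d1
    simp only [LinearMap.add_apply, LinearMap.smul_apply, map_add, map_smul]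
    linear_combination (norm := module) d0 + s • d1
  set D := br (𝔗 u) (𝔗 v) - 𝔗 (ρL (𝔗 u) v + ρR (𝔗 v) u) with hD
  have key' : ∀ s : K, ((LinearMap.id + s • br x : g →ₗ[K] g)) ((s * s) • D) = 0 := by
    intro s
    rw [← expand, map_sub, key, sub_self]
  have k1 := key' 1
  have k2 := key' (-1)
  simp only [LinearMap.add_apply, LinearMap.smul_apply, LinearMap.id_apply, map_smul] at k1 k2
  have h2 : (2 : K) • D = 0 := by
    linear_combination (norm := module) k1 + k2
  have h0 : D = 0 := (smul_eq_zero.mp h2).resolve_left two_ne_zero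
  rw [← sub_eq_zero, expand, h0, smul_zero]
end

section
/- Let T be a relative Rota-Baxter operator on a Leibniz algebra (g,[·,·]_g) with respect to a representation (V; ρL, ρR), and let x ∈ g be a Nijenhuis element associated to T. Then ρL(x) is a Nijenhuis operator on the Leibniz algebra (V,[·,·]_T); that is, for all u,v ∈ V: [ρL(x)u, ρL(x)v]_T = ρL(x)([ρL(x)u, v]_T + [u, ρL(x)v]_T − ρL(x)[u,v]_T). -/
/-- If `x` is a Nijenhuis element associated to a relative Rota-Baxter
operator `T`, then `ρL(x)` is a Nijenhuis operator on the Leibniz algebra `(V,[·,·]_T)`. -/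
theorem nijenhuis_element_gives_nijenhuis_operator
    {K : Type*} [Field K] [CharZero K]
    {g V : Type*} [AddCommGroup g] [Module K g] [AddCommGroup V] [Module K V]
    (br : g →ₗ[K] g →ₗ[K] g)
    (leib : ∀ x y z : g, br x (br y z) = br (br x y) z + br y (br x z))
    (ρL ρR : g →ₗ[K] Module.End K V)
    (hL : ∀ x y : g, ρL (br x y) = ρL x * ρL y - ρL y * ρL x)
    (hR : ∀ x y : g, ρR (br x y) = ρL x * ρR y - ρR y * ρL x)
    (hRL : ∀ x y : g, ρR y * ρL x = -(ρR y * ρR x))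
    (T : V →ₗ[K] g)
    (hT : ∀ u v : V, br (T u) (T v) = T (ρL (T u) v + ρR (T v) u))
    (bT : V → V → V)
    (hbT : ∀ u v : V, bT u v = ρL (T u) v + ρR (T v) u)
    (x : g)
    (hNij1 : ∀ y z : g, br (br x y) (br x z) = 0)
    (hNij2 : ∀ y : g, ρL (br x y) * ρL x = 0)
    (hNij3 : ∀ y : g, ρR (br x y) * ρL x = 0)
    (hNij4 : ∀ u : V, br x (T (ρL x u) - br x (T u)) = 0) :
    ∀ u v : V,
      bT (ρL x u) (ρL x v) =
        ρL x (bT (ρL x u) v + bT u (ρL x v) - ρL x (bT u v)) := by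
  intro u v
  have h1 : ∀ y w, ρL (br x y) w = ρL x (ρL y w) - ρL y (ρL x w) := fun y w => by
    rw [hL]; rfl
  have h2 : ∀ y w, ρR (br x y) w = ρL x (ρR y w) - ρR y (ρL x w) := fun y w => by
    rw [hR]; rfl
  have h3 : ∀ y w, ρL (br x y) (ρL x w) = 0 := fun y w => LinearMap.congr_fun (hNij2 y) w
  have h4 : ∀ y w, ρR (br x y) (ρL x w) = 0 := fun y w => LinearMap.congr_fun (hNij3 y) w
  have c1 := h1 (T (ρL x u) - br x (T u)) v
  have c2 := h2 (T (ρL x v) - br x (T v)) u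
  rw [hNij4] at c1 c2
  have e1 := h3 (T u) v
  have e2 := h4 (T v) u
  have f1 := congrArg (ρL x) (h1 (T u) v)
  have f2 := congrArg (ρL x) (h2 (T v) u)
  simp only [map_zero, LinearMap.zero_apply, map_sub, LinearMap.sub_apply, e1, e2, f1, f2,
    sub_zero] at c1 c2
  simp only [hbT, map_add, map_sub]
  have c1' := (sub_eq_zero.mp c1.symm).symm
  have c2' := (sub_eq_zero.mp c2.symm).symm
  rw [c1', c2']
  abel
end

section
/- Let g = K³ with basis e₁, e₂, e₃ and the Leibniz bracket determined bilinearly by [e₁,e₁]_g = e₃ and all other brackets of basis vectors equal to zero, with its regular representation ρL(x)y = [x,y]_g, ρR(x)y = [y,x]_g. Then every linear map T : g → g whose matrix (a_{ij}) with respect to the basis (where Te_j = a_{1j}e₁ + a_{2j}e₂ + a_{3j}e₃) satisfies a_{11} = a_{12} = a_{13} = 0 is a relative Rota-Baxter operator on (g,[·,·]_g) with respect to the regular representation. -/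
/-- On the 3-dimensional Leibniz algebra with `[e₁,e₁] = e₃` (all other
basis brackets zero), every linear map `T` whose matrix satisfies
`a₁₁ = a₁₂ = a₁₃ = 0` is a relative Rota-Baxter operator with respect to the regular
representation. -/
theorem example_rota_baxter_first_family
    {K : Type*} [Field K] [CharZero K]
    (e : Fin 3 → (Fin 3 → K))
    (he : ∀ i : Fin 3, e i = Pi.single i 1)
    (br : (Fin 3 → K) →ₗ[K] (Fin 3 → K) →ₗ[K] (Fin 3 → K))
    (hbr : ∀ i j : Fin 3, br (e i) (e j) = if i = 0 ∧ j = 0 then e 2 else 0)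
    (T : (Fin 3 → K) →ₗ[K] (Fin 3 → K))
    (a : Fin 3 → Fin 3 → K)
    (ha : ∀ i j : Fin 3, T (e j) i = a i j)
    (h11 : a 0 0 = 0) (h12 : a 0 1 = 0) (h13 : a 0 2 = 0) :
    ∀ x y : Fin 3 → K, br (T x) (T y) = T (br (T x) y + br x (T y)) := by
  have dec : ∀ x : Fin 3 → K, x = x 0 • e 0 + x 1 • e 1 + x 2 • e 2 := by
    intro x
    ext i
    fin_cases i <;> simp [he]
  have key : ∀ x y : Fin 3 → K, br x y = (x 0 * y 0) • e 2 := by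
    intro x y
    conv_lhs => rw [dec x, dec y]
    simp [hbr, smul_smul, mul_comm]
  have hT : ∀ x : Fin 3 → K, T x 0 = 0 := by
    intro x
    conv_lhs => rw [dec x]
    simp [ha, h11, h12, h13]
  intro x y
  simp [key, hT]
end

section
/- Let g = K³ with basis e₁, e₂, e₃ and the Leibniz bracket determined bilinearly by [e₁,e₁]_g = e₃ and all other brackets of basis vectors equal to zero, with its regular representation ρL(x)y = [x,y]_g, ρR(x)y = [y,x]_g. Then every linear map T : g → g whose matrix (a_{ij}) with respect to the basis (where Te_j = a_{1j}e₁ + a_{2j}e₂ + a_{3j}e₃) satisfies a_{12} = a_{13} = a_{23} = 0, a_{11} ≠ 0 and a_{33} = a_{11}/2 is a relative Rota-Baxter operator on (g,[·,·]_g) with respect to the regular representation. -/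
/-- On the 3-dimensional Leibniz algebra with `[e₁,e₁] = e₃` (all other
basis brackets zero), every linear map `T` whose matrix satisfies
`a₁₂ = a₁₃ = a₂₃ = 0`, `a₁₁ ≠ 0` and `a₃₃ = a₁₁/2` is a relative Rota-Baxter operator
with respect to the regular representation. -/
theorem example_rota_baxter_second_family
    {K : Type*} [Field K] [CharZero K]
    (e : Fin 3 → (Fin 3 → K))
    (he : ∀ i : Fin 3, e i = Pi.single i 1)
    (br : (Fin 3 → K) →ₗ[K] (Fin 3 → K) →ₗ[K] (Fin 3 → K))
    (hbr : ∀ i j : Fin 3, br (e i) (e j) = if i = 0 ∧ j = 0 then e 2 else 0)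
    (T : (Fin 3 → K) →ₗ[K] (Fin 3 → K))
    (a : Fin 3 → Fin 3 → K)
    (ha : ∀ i j : Fin 3, T (e j) i = a i j)
    (h12 : a 0 1 = 0) (h13 : a 0 2 = 0) (h23 : a 1 2 = 0)
    (h11 : a 0 0 ≠ 0) (h33 : a 2 2 = a 0 0 / 2) :
    ∀ x y : Fin 3 → K, br (T x) (T y) = T (br (T x) y + br x (T y)) := by
  have hx : ∀ x : Fin 3 → K, x = x 0 • e 0 + x 1 • e 1 + x 2 • e 2 := by
    intro x
    ext i
    fin_cases i <;> simp [he]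
  have hB : ∀ x y : Fin 3 → K, br x y = (x 0 * y 0) • e 2 := by
    intro x y
    conv_lhs => rw [hx x, hx y]
    simp [hbr, smul_smul, mul_comm]
  have hT0 : ∀ x : Fin 3 → K, T x 0 = a 0 0 * x 0 := by
    intro x
    conv_lhs => rw [hx x]
    simp [ha, h12, h13, mul_comm]
  have hT2 : T (e 2) = (a 0 0 / 2) • e 2 := by
    rw [hx (T (e 2))]
    simp [ha, h13, h23, h33]
  intro x y
  rw [hB, hB, hB, ← add_smul, map_smul, hT2, smul_smul, hT0, hT0]
  congr 1
  ring
end
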